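/- Let H = ℓ²(ℤ, ℂ) with standard orthonormal basis (e_k)_{k∈ℤ}, P the projection with (P f)(k) = f(k) for k > 0 and 0 otherwise, and S^m the bilateral shift S^m e_k = e_{k+m}. Set Ω(S^m,S^n) := (S^m∘P)∘(S^n∘P) − (S^n∘P)∘(S^m∘P). If m + n + p + q = 0, then for every k ∈ ℤ: ⟨Ω(S^m,S^n)(Ω(S^p,S^q) e_k), e_k⟩ = [(if 0 < k and 0 < q + k then (1:ℂ) else 0) − (if 0 < k and 0 < p + k then 1 else 0)] * [(if 0 < k + p + q and 0 < n + k + p + q then (1:ℂ) else 0) − (if 0 < k + p + q and 0 < m + k + p + q then 1 else 0)]. -/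

import Mathlib

/-!
Each operator `S ∘ P`, with `S` the shift by `a`, sends `e k` to `e (k + a)` if `0 < k` and to `0`
otherwise. Hence the commutator `Ω(S^a, S^b)` acts on the basis as a weighted shift
`e k ↦ c • e (k + a + b)`, where `c` is a difference of two indicators (`omega_apply_e`).
Composing two such weighted shifts multiplies the weights, and `m + n + p + q = 0` brings the
result back to a multiple of `e k`. The weights are real, so the conjugation in the first slot of
the inner product has no effect.
-/

open scoped InnerProductSpace

/-- The Hilbert space `H = ℓ²(ℤ, ℂ)`. -/
noncomputable abbrev H : Type := lp (fun _ : ℤ => ℂ) 2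

/-- The standard orthonormal basis vector `e k` of `ℓ²(ℤ, ℂ)`. -/
noncomputable def e (k : ℤ) : H := lp.single 2 k (1 : ℂ)

/-- A bounded operator has finite rank iff its range is a finite-dimensional subspace. -/
def FiniteRank (T : H →L[ℂ] H) : Prop :=
  FiniteDimensional ℂ (LinearMap.range (T : H →ₗ[ℂ] H))

/-- The projection acts diagonally on the standard basis. -/
lemma proj_apply_e (P : H →L[ℂ] H)
    (hP : ∀ (f : H) (k : ℤ), P f k = if 0 < k then f k else 0) (k : ℤ) :
    P (e k) = if 0 < k then e k else 0 := by
  ext j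
  rw [hP]
  by_cases hjk : j = k
  · subst hjk
    split_ifs <;> simp
  · have h0 : e k j = 0 := by simp [e, lp.single_apply, hjk]
    split_ifs <;> simp [h0]

lemma inner_e_self (k : ℤ) : ⟪e k, e k⟫_ℂ = 1 := by
  simp [e]

/-- The commutator of two compressed shifts is a weighted shift on the standard basis. -/
lemma omega_apply_e (a b : ℤ) (P Sa Sb : H →L[ℂ] H)
    (hP : ∀ (f : H) (k : ℤ), P f k = if 0 < k then f k else 0)
    (hSa : ∀ k : ℤ, Sa (e k) = e (k + a))
    (hSb : ∀ k : ℤ, Sb (e k) = e (k + b)) (k : ℤ) :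
    ((Sa ∘L P) ∘L (Sb ∘L P) - (Sb ∘L P) ∘L (Sa ∘L P)) (e k)
      = ((if 0 < k ∧ 0 < b + k then (1 : ℂ) else 0)
          - (if 0 < k ∧ 0 < a + k then (1 : ℂ) else 0)) • e (k + a + b) := by
  have two_step (a b : ℤ) (Sa Sb : H →L[ℂ] H) (hSa : ∀ k : ℤ, Sa (e k) = e (k + a))
      (hSb : ∀ k : ℤ, Sb (e k) = e (k + b)) :
      Sa (P (Sb (P (e k)))) = (if 0 < k ∧ 0 < b + k then (1 : ℂ) else 0) • e (k + b + a) := by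
    rw [proj_apply_e P hP, add_comm b k]
    by_cases h1 : 0 < k
    · by_cases h2 : 0 < k + b <;> simp [h1, h2, hSa, hSb, proj_apply_e P hP]
    · simp [h1]
  simp only [sub_apply, ContinuousLinearMap.comp_apply]
  rw [two_step a b Sa Sb hSa hSb, two_step b a Sb Sa hSb hSa, add_right_comm k b a, sub_smul]

/-- When `m + n + p + q = 0`, the diagonal matrix entries of
`Ω(S^m,S^n) ∘ Ω(S^p,S^q)` are given by an explicit product of differences of
indicator functions (the case analysis `A₁`/`A₋₁` of the paper). -/
theorem omega_sq_diagonal_formula (m n p q : ℤ) (P Sm Sn Sp Sq : H →L[ℂ] H)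
    (hP : ∀ (f : H) (k : ℤ), P f k = if 0 < k then f k else 0)
    (hSm : ∀ k : ℤ, Sm (e k) = e (k + m))
    (hSn : ∀ k : ℤ, Sn (e k) = e (k + n))
    (hSp : ∀ k : ℤ, Sp (e k) = e (k + p))
    (hSq : ∀ k : ℤ, Sq (e k) = e (k + q))
    (hmnpq : m + n + p + q = 0) (k : ℤ) :
    ⟪((Sm ∘L P) ∘L (Sn ∘L P) - (Sn ∘L P) ∘L (Sm ∘L P))
        (((Sp ∘L P) ∘L (Sq ∘L P) - (Sq ∘L P) ∘L (Sp ∘L P)) (e k)),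
      e k⟫_ℂ
      = ((if 0 < k ∧ 0 < q + k then (1 : ℂ) else 0)
          - (if 0 < k ∧ 0 < p + k then (1 : ℂ) else 0))
        * ((if 0 < k + p + q ∧ 0 < n + k + p + q then (1 : ℂ) else 0)
          - (if 0 < k + p + q ∧ 0 < m + k + p + q then (1 : ℂ) else 0)) := by
  rw [omega_apply_e p q P Sp Sq hP hSp hSq, map_smul,
    omega_apply_e m n P Sm Sn hP hSm hSn, smul_smul, inner_smul_left,
    show k + p + q + m + n = k by omega, inner_e_self, mul_one,
    show n + (k + p + q) = n + k + p + q by ring, show m + (k + p + q) = m + k + p + q by ring]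
  simp only [map_mul, map_sub, apply_ite (starRingEnd ℂ), map_one, map_zero]
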